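/- Let G be a torsion-free abelian group and let R be a G-graded commutative ring. Then the Jacobson radical of R is a graded ideal. -/

import Mathlib

open DirectSum

theorem IsAddTorsionFree.twoUniqueSums {G : Type*} [AddCommGroup G] [IsAddTorsionFree G] :
    TwoUniqueSums G :=
  TwoUniqueSums.of_injective_addHom (DivisibleHull.coeAddMonoidHom G : G →ₙ+ DivisibleHull G)
    DivisibleHull.coe_injective inferInstance

section

variable {G : Type*} [AddCommGroup G] [DecidableEq G]
variable {R : Type*} [CommRing R] (𝒜 : G → AddSubgroup R) [GradedRing 𝒜]

/-- If `a + b` is the only way to write this degree as a sum of degrees of components of `u` and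
`v` outside the prime `p`, then the component of `u * v` in this degree is outside `p`. -/
theorem Ideal.IsPrime.decompose_mul_notMem {p : Ideal R} (hp : p.IsPrime) {u v : R} {a b : G}
    (ha : (decompose 𝒜 u a : R) ∉ p) (hb : (decompose 𝒜 v b : R) ∉ p)
    (hab : ∀ x y, (decompose 𝒜 u x : R) ∉ p → (decompose 𝒜 v y : R) ∉ p →
      x + y = a + b → x = a ∧ y = b) :
    (decompose 𝒜 (u * v) (a + b) : R) ∉ p := by
  classical
  have mem_support : ∀ {w : R} {c : G}, (decompose 𝒜 w c : R) ∉ p →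
      c ∈ (decompose 𝒜 w).support := by
    intro w c hc
    rw [DFinsupp.mem_support_iff]
    intro h
    exact hc (by simp [h])
  have hmem : (a, b) ∈ ((decompose 𝒜 u).support ×ˢ (decompose 𝒜 v).support).filter
      (fun ij ↦ ij.1 + ij.2 = a + b) := by
    simp only [Finset.mem_filter, Finset.mem_product, and_true]
    exact ⟨mem_support ha, mem_support hb⟩
  rw [decompose_mul, coe_mul_apply, ← Finset.add_sum_erase _ _ hmem]
  have hrest : ∑ ij ∈ (((decompose 𝒜 u).support ×ˢ (decompose 𝒜 v).support).filter
      (fun ij ↦ ij.1 + ij.2 = a + b)).erase (a, b),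
      (decompose 𝒜 u ij.1 * decompose 𝒜 v ij.2 : R) ∈ p := by
    refine p.sum_mem fun ij hij ↦ ?_
    rw [Finset.mem_erase, Finset.mem_filter] at hij
    by_contra h
    obtain ⟨h₁, h₂⟩ := hab ij.1 ij.2 (fun h' ↦ h (p.mul_mem_right _ h'))
      (fun h' ↦ h (p.mul_mem_left _ h')) hij.2.2
    exact hij.1 (Prod.ext h₁ h₂)
  rw [p.add_mem_iff_left hrest]
  exact hp.mul_notMem ha hb

/-- Modulo a prime, a unit of a ring graded by a group with two unique sums is homogeneous. -/
theorem IsUnit.degree_eq_of_notMem_prime [TwoUniqueSums G] {u : R} (hu : IsUnit u)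
    {p : Ideal R} (hp : p.IsPrime) {i j : G} (hi : (decompose 𝒜 u i : R) ∉ p)
    (hj : (decompose 𝒜 u j : R) ∉ p) : i = j := by
  classical
  by_contra hij
  obtain ⟨v, huv⟩ := hu.exists_right_inv
  let S : R → Finset G := fun w ↦
    (decompose 𝒜 w).support.filter (fun c ↦ (decompose 𝒜 w c : R) ∉ p)
  have mem_S : ∀ {w : R} {c : G}, c ∈ S w ↔ (decompose 𝒜 w c : R) ∉ p := by
    intro w c
    simp only [S, Finset.mem_filter, DFinsupp.mem_support_iff, and_iff_right_iff_imp]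
    intro hc h
    exact hc (by simp [h])
  have hv : (S v).Nonempty := by
    by_contra h
    rw [Finset.not_nonempty_iff_eq_empty] at h
    have hvp : v ∈ p := by
      rw [← sum_support_decompose 𝒜 v]
      refine p.sum_mem fun c _ ↦ ?_
      by_contra hc
      simpa [h] using mem_S.2 hc
    exact hp.ne_top (p.eq_top_of_isUnit_mem hvp (IsUnit.of_mul_eq_one_right u huv))
  have hcard : 1 < (S u).card * (S v).card :=
    (Finset.one_lt_card.2 ⟨i, mem_S.2 hi, j, mem_S.2 hj, hij⟩).trans_le
      (Nat.le_mul_of_pos_right _ hv.card_pos)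
  obtain ⟨⟨a, b⟩, hab, ⟨c, d⟩, hcd, hne, uab, ucd⟩ :=
    TwoUniqueSums.uniqueAdd_of_one_lt_card hcard
  rw [Finset.mem_product] at hab hcd
  have degree_eq_zero : ∀ {x y : G}, x ∈ S u → y ∈ S v → UniqueAdd (S u) (S v) x y →
      x + y = 0 := by
    intro x y hx hy h
    by_contra h0
    refine hp.decompose_mul_notMem 𝒜 (mem_S.1 hx) (mem_S.1 hy)
      (fun x' y' hx' hy' ↦ h (mem_S.2 hx') (mem_S.2 hy')) ?_
    rw [huv, decompose_of_mem_ne 𝒜 SetLike.GradedOne.one_mem (Ne.symm h0)]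
    exact p.zero_mem
  have h := uab hcd.1 hcd.2
    ((degree_eq_zero hcd.1 hcd.2 ucd).trans (degree_eq_zero hab.1 hab.2 uab).symm)
  exact hne (Prod.ext h.1.symm h.2.symm)

/-- The components of nonzero degree of an element of the Jacobson radical are nilpotent. -/
theorem isNilpotent_decompose_of_mem_jacobson [IsAddTorsionFree G] {f : R}
    (hf : f ∈ Ideal.jacobson (⊥ : Ideal R)) {i : G} (hi : i ≠ 0) :
    IsNilpotent (decompose 𝒜 f i : R) := by
  classical
  have : TwoUniqueSums G := IsAddTorsionFree.twoUniqueSums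
  rw [nilpotent_iff_mem_prime]
  intro p hp
  by_contra hfi
  have hinj : Function.Injective fun k : ℕ ↦ -(k • i) := by
    intro k l hkl
    have h : ((k : ℤ) - l) • i = 0 := by
      rw [sub_zsmul, natCast_zsmul, natCast_zsmul, ← sub_eq_add_neg]
      exact sub_eq_zero.2 (neg_injective hkl)
    have := (IsAddTorsionFree.zsmul_eq_zero_iff_left hi).1 h
    omega
  obtain ⟨_, ⟨k, rfl⟩, hk⟩ :=
    (Set.infinite_range_of_injective hinj).exists_notMem_finset (decompose 𝒜 f).support
  rw [DFinsupp.notMem_support_iff] at hk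
  set r : R := (decompose 𝒜 f i : R)
  have hrk : r ^ k ∈ 𝒜 (k • i) := SetLike.pow_mem_graded k (decompose 𝒜 f i).2
  have hdeg : i + k • i ≠ 0 := by
    rw [← succ_nsmul']
    exact fun h ↦ hi ((nsmul_eq_zero_iff_right k.succ_ne_zero).1 h)
  have hcomp₀ : (decompose 𝒜 (f * r ^ k + 1) 0 : R) = 1 := by
    have h := coe_decompose_mul_add_of_right_mem 𝒜 (a := f) (i := -(k • i)) hrk
    rw [neg_add_cancel, hk, ZeroMemClass.coe_zero, zero_mul] at h
    rw [decompose_add, DirectSum.add_apply, AddSubgroup.coe_add, h,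
      decompose_of_mem_same 𝒜 SetLike.GradedOne.one_mem, zero_add]
  have hcomp : (decompose 𝒜 (f * r ^ k + 1) (i + k • i) : R) = r * r ^ k := by
    rw [decompose_add, DirectSum.add_apply, AddSubgroup.coe_add,
      coe_decompose_mul_add_of_right_mem 𝒜 hrk,
      decompose_of_mem_ne 𝒜 SetLike.GradedOne.one_mem (Ne.symm hdeg), add_zero]
  refine hdeg ((Ideal.mem_jacobson_bot.1 hf (r ^ k)).degree_eq_of_notMem_prime 𝒜 hp ?_ ?_)
  · rw [hcomp, ← pow_succ']
    exact fun h ↦ hfi (hp.mem_of_pow_mem _ h)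
  · rw [hcomp₀]
    exact hp.one_notMem

end

/-- The Jacobson radical of a `G`-graded commutative ring with `G` a torsion-free abelian
group is a graded ideal. -/
theorem jacobson_radical_isHomogeneous
    {G : Type*} [AddCommGroup G] [DecidableEq G]
    (hG : ∀ (n : ℕ) (x : G), n ≠ 0 → n • x = 0 → x = 0)
    {R : Type*} [CommRing R] (𝒜 : G → AddSubgroup R) [GradedRing 𝒜] :
    Ideal.IsHomogeneous 𝒜 (Ideal.jacobson (⊥ : Ideal R)) := by
  classical
  have : IsAddTorsionFree G := ⟨fun n hn x y hxy ↦
    sub_eq_zero.1 (hG n _ hn (by rw [nsmul_sub]; exact sub_eq_zero.2 hxy))⟩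
  intro i f hf
  have hne : ∀ j ≠ 0, (decompose 𝒜 f j : R) ∈ Ideal.jacobson (⊥ : Ideal R) := fun j hj ↦
    Ideal.radical_le_jacobson (isNilpotent_decompose_of_mem_jacobson 𝒜 hf hj)
  obtain rfl | hi := eq_or_ne i 0
  · by_cases h0 : (0 : G) ∈ (decompose 𝒜 f).support
    · have hsum := sum_support_decompose 𝒜 f
      rw [← Finset.add_sum_erase _ _ h0] at hsum
      rw [← Ideal.add_mem_iff_left _ (Ideal.sum_mem _ fun j hj ↦ hne j (Finset.ne_of_mem_erase hj)),
        hsum]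
      exact hf
    · rw [DFinsupp.notMem_support_iff.1 h0]
      exact Ideal.zero_mem _
  · exact hne i hi
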